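/- If n is a positive integer and λ is a real number with 0 < λ ≤ n, then Σ_{k=n}^{∞} λ^k/k! ≤ (eλ/n)^n. -/

import Mathlib

/-!
The bound is Chernoff's argument with the optimal tilt `n / lam`. Since `lam / n ≤ 1`, each `k ≥ n`
satisfies `lam ^ k = (lam / n) ^ k * n ^ k ≤ (lam / n) ^ n * n ^ k`; dividing by `k!` and summing,
the tail of the exponential series at `n` is at most the whole series, which is `exp n = (exp 1) ^ n`.
-/

open MeasureTheory Real
open scoped ENNReal

noncomputable section

/-- **Lemma 2.4.** If `0 < λ ≤ n`, then `Σ_{k=n}^∞ λ^k/k! ≤ (eλ/n)^n`. -/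
theorem poisson_tail (n : ℕ) (hn : 0 < n) (lam : ℝ) (hlam : 0 < lam) (hlamn : lam ≤ n) :
    ∑' k : ℕ, lam ^ (k + n) / (Nat.factorial (k + n) : ℝ) ≤
      (Real.exp 1 * lam / n) ^ n := by
  have hn0 : (0 : ℝ) < n := by exact_mod_cast hn
  have hexp : HasSum (fun k : ℕ => (n : ℝ) ^ k / (Nat.factorial k : ℝ)) (Real.exp n) := by
    rw [Real.exp_eq_exp_ℝ]
    exact NormedSpace.expSeries_div_hasSum_exp (n : ℝ)
  have hterm : ∀ k : ℕ, lam ^ (k + n) / (Nat.factorial (k + n) : ℝ) ≤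
      (lam / n) ^ n * ((n : ℝ) ^ (k + n) / (Nat.factorial (k + n) : ℝ)) := by
    intro k
    have hpow : (lam / n) ^ (k + n) ≤ (lam / n) ^ n :=
      pow_le_pow_of_le_one (by positivity) ((div_le_one hn0).2 hlamn) (Nat.le_add_left n k)
    calc lam ^ (k + n) / (Nat.factorial (k + n) : ℝ)
        = (lam / n) ^ (k + n) * ((n : ℝ) ^ (k + n) / (Nat.factorial (k + n) : ℝ)) := by
          rw [← mul_div_assoc, ← mul_pow, div_mul_cancel₀ _ hn0.ne']
      _ ≤ _ := by gcongr
  have htail : ∑' k : ℕ, (n : ℝ) ^ (k + n) / (Nat.factorial (k + n) : ℝ) ≤ Real.exp n := by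
    rw [← hexp.tsum_eq, ← hexp.summable.sum_add_tsum_nat_add n]
    exact le_add_of_nonneg_left (Finset.sum_nonneg fun k _ => by positivity)
  have hs : Summable fun k : ℕ => (n : ℝ) ^ (k + n) / (Nat.factorial (k + n) : ℝ) :=
    (summable_nat_add_iff n).2 hexp.summable
  have hl : Summable fun k : ℕ => lam ^ (k + n) / (Nat.factorial (k + n) : ℝ) :=
    (summable_nat_add_iff n).2 (Real.summable_pow_div_factorial lam)
  calc ∑' k : ℕ, lam ^ (k + n) / (Nat.factorial (k + n) : ℝ)
      ≤ ∑' k : ℕ, (lam / n) ^ n * ((n : ℝ) ^ (k + n) / (Nat.factorial (k + n) : ℝ)) :=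
        hl.tsum_le_tsum hterm (hs.mul_left _)
    _ = (lam / n) ^ n * ∑' k : ℕ, (n : ℝ) ^ (k + n) / (Nat.factorial (k + n) : ℝ) := tsum_mul_left
    _ ≤ (lam / n) ^ n * Real.exp n := by gcongr
    _ = (Real.exp 1 * lam / n) ^ n := by
        rw [← Real.exp_one_pow, ← mul_pow]
        ring

end
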